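/- Let G be a group acting unitarily on Hilbert spaces H₁ and H₂, with Jacobs–de Leeuw–Glicksberg decompositions H_i = H_{i,o} ⊕ H_{i,r} into flight (weakly mixing) and reversible (compact/almost periodic) vectors. Then the diagonal action of G on H₁ ⊗ H₂ satisfies (H₁ ⊗ H₂)_r = H_{1,r} ⊗ H_{2,r}; equivalently, if f ∈ H_{1,o} and g ∈ H₂, or f ∈ H₁ and g ∈ H_{2,o}, then f ⊗ g is a flight vector, while reversible tensor reversible is reversible. -/

import Mathlib

open RealInnerProductSpace

/-- `f` is a flight vector for the action `U`: `0` lies in the weak closure of the orbit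
`{U g f : g ∈ G}`. -/
def IsFlight {G H : Type*} [NormedAddCommGroup H] [InnerProductSpace ℝ H]
    (U : G → H → H) (f : H) : Prop :=
  ∀ ε > (0 : ℝ), ∀ F : Finset H, ∃ g : G, ∀ w ∈ F, |⟪U g f, w⟫| < ε

/-- The reversible part of a unitary `G`-action: the closed span of all finite-dimensional
invariant subspaces. -/
def revSpace {G H : Type*} [NormedAddCommGroup H] [InnerProductSpace ℝ H]
    (U : G → H ≃ₗᵢ[ℝ] H) : Set H :=
  closure (↑(sSup {V : Submodule ℝ H |
    FiniteDimensional ℝ V ∧ ∀ g : G, ∀ v ∈ V, U g v ∈ V}) : Set H)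

/-!
The heart of the matter is that `f ⊗ b` is orthogonal to every finite-dimensional invariant
subspace `V` of `W` whenever `f` is orthogonal to the reversible part of `H`. A vector `v` of `W`
acts as a Hilbert–Schmidt operator `C v : H → H'`, `⟪C v a, b⟫ = ⟪v, a ⊗ b⟫`, and for an
orthonormal basis `e` of `V` the operator `A = ∑ᵢ (C eᵢ)* (C eᵢ)` is compact and positive. It does
not depend on `e`, hence it commutes with the action. Its eigenspaces for nonzero eigenvalues are
therefore finite-dimensional and invariant, so they are orthogonal to `f`, and the spectral theorem
gives `A f = 0`, that is, `C v f = 0` for all `v` in `V`. Consequently, modulo the orthogonal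
complement of the reversible part of `W`, each `a ⊗ b` equals the tensor of the reversible
parts of `a` and `b`.
-/

open Filter Topology InnerProductSpace

section InnerProductSpace

variable {𝕜 E : Type*} [RCLike 𝕜] [NormedAddCommGroup E] [InnerProductSpace 𝕜 E]

-- Replacing `p + q` by `p` can only bring it closer to a point of `R`, as `q` is orthogonal to `R`.
theorem le_topologicalClosure_of_dense_sup_orthogonal {K R : Submodule 𝕜 E} (hKR : K ≤ R)
    (hdense : Dense ((K ⊔ Rᗮ : Submodule 𝕜 E) : Set E)) : R ≤ K.topologicalClosure := by
  intro v hv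
  refine Metric.mem_closure_iff.2 fun ε hε => ?_
  obtain ⟨w, hw, hvw⟩ := Metric.mem_closure_iff.1 (hdense v) ε hε
  obtain ⟨p, hp, q, hq, rfl⟩ := Submodule.mem_sup.1 hw
  have horth : inner 𝕜 (v - p) (-q) = 0 := by
    rw [inner_neg_right, hq _ (R.sub_mem hv (hKR hp)), neg_zero]
  have hpyth := norm_add_sq_eq_norm_sq_add_norm_sq_of_inner_eq_zero _ _ horth
  refine ⟨p, hp, lt_of_le_of_lt ?_ hvw⟩
  rw [dist_eq_norm, dist_eq_norm, ← sub_sub, sub_eq_add_neg (v - p)]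
  exact le_of_sq_le_sq (by nlinarith [mul_self_nonneg ‖-q‖]) (norm_nonneg _)

theorem tendsto_inner_zero_of_dense_span {ι : Type*} {l : Filter ι} {x : ι → E} {C : ℝ}
    (hx : ∀ i, ‖x i‖ ≤ C) {s : Set E} (hs : Dense (Submodule.span 𝕜 s : Set E))
    (h : ∀ w ∈ s, Tendsto (fun i => inner 𝕜 (x i) w) l (𝓝 0)) (w : E) :
    Tendsto (fun i => inner 𝕜 (x i) w) l (𝓝 0) := by
  have hspan : ∀ w ∈ Submodule.span 𝕜 s, Tendsto (fun i => inner 𝕜 (x i) w) l (𝓝 0) := by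
    intro w hw
    induction hw using Submodule.span_induction with
    | mem w hw => exact h w hw
    | zero => simpa only [inner_zero_right] using tendsto_const_nhds
    | add v w _ _ hv hw => simpa only [inner_add_right, add_zero] using hv.add hw
    | smul c w _ hw => simpa only [inner_smul_right, mul_zero] using hw.const_mul c
  have hequi : Equicontinuous fun i w => inner 𝕜 (x i) w :=
    (LipschitzWith.uniformEquicontinuous _ C.toNNReal fun i =>
      (innerSL 𝕜 (x i)).lipschitz.weaken (by
        rw [← NNReal.coe_le_coe, coe_nnnorm, innerSL_apply_norm]
        exact (hx i).trans (Real.le_coe_toNNReal C))).equicontinuous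
  exact (hequi.isClosed_setOfPred_tendsto continuous_const).closure_subset_iff.2 hspan (hs w)

theorem sum_apply_orthonormalBasis_eq {V : Type*} [NormedAddCommGroup V] [InnerProductSpace ℝ V]
    [FiniteDimensional ℝ V] {ι κ : Type*} [Fintype ι] [Fintype κ] (e : OrthonormalBasis ι ℝ V)
    (e' : OrthonormalBasis κ ℝ V) (β : V →ₗ[ℝ] V →ₗ[ℝ] ℝ) :
    ∑ i, β (e i) (e i) = ∑ j, β (e' j) (e' j) := by
  simpa only [map_sum, TensorProduct.lift.tmul] using
    congrArg (TensorProduct.lift β)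
      ((canonicalCovariantTensor_eq_sum V e).symm.trans (canonicalCovariantTensor_eq_sum V e'))

end InnerProductSpace

section Flight

variable {G H : Type*} [NormedAddCommGroup H] [InnerProductSpace ℝ H]

theorem isFlight_iff_exists_filter {U : G → H → H} {f : H} :
    IsFlight U f ↔ ∃ l : Filter G, l.NeBot ∧ ∀ w, Tendsto (fun g => ⟪U g f, w⟫) l (𝓝 0) := by
  constructor
  · intro hf
    refine ⟨comap (fun g w => ⟪U g f, w⟫) (𝓝 0), ?_, tendsto_pi_nhds.1 tendsto_comap⟩
    have hbasis := (Metric.nhds_basis_ball (x := (0 : ℝ))).pi_self (ι := H)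
    rw [← nhds_pi] at hbasis
    refine (hbasis.comap _).neBot_iff.2 ?_
    rintro ⟨I, ε⟩ ⟨hI, hε⟩
    obtain ⟨g, hg⟩ := hf ε hε hI.toFinset
    exact ⟨g, by simpa using hg⟩
  · rintro ⟨l, hl, hlim⟩ ε hε F
    refine Eventually.exists (f := l) ((Finset.eventually_all F).2 fun w _ => ?_)
    simpa using (hlim w).eventually (Metric.ball_mem_nhds 0 hε)

end Flight

section Reversible

variable {G H : Type*} [NormedAddCommGroup H] [InnerProductSpace ℝ H]

/-- The set `revSpace T` as a closed submodule. -/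
def reversibleSubmodule (T : G → H ≃ₗᵢ[ℝ] H) : Submodule ℝ H :=
  (sSup {V : Submodule ℝ H |
    FiniteDimensional ℝ V ∧ ∀ g : G, ∀ v ∈ V, T g v ∈ V}).topologicalClosure

variable {T : G → H ≃ₗᵢ[ℝ] H}

theorem coe_reversibleSubmodule : (reversibleSubmodule T : Set H) = revSpace T :=
  Submodule.topologicalClosure_coe _

theorem isClosed_reversibleSubmodule : IsClosed (reversibleSubmodule T : Set H) :=
  Submodule.isClosed_topologicalClosure _

theorem le_reversibleSubmodule {V : Submodule ℝ H} (hfin : FiniteDimensional ℝ V)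
    (hinv : ∀ g, ∀ v ∈ V, T g v ∈ V) : V ≤ reversibleSubmodule T :=
  le_trans' (Submodule.le_topologicalClosure _) (le_sSup ⟨hfin, hinv⟩)

theorem reversibleSubmodule_le {K : Submodule ℝ H} (hK : IsClosed (K : Set H))
    (h : ∀ V : Submodule ℝ H, FiniteDimensional ℝ V → (∀ g, ∀ v ∈ V, T g v ∈ V) → V ≤ K) :
    reversibleSubmodule T ≤ K :=
  Submodule.topologicalClosure_minimal _ (sSup_le fun V hV => h V hV.1 hV.2) hK

variable [CompleteSpace H]

instance : (reversibleSubmodule T).HasOrthogonalProjection :=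
  have : CompleteSpace (reversibleSubmodule T) := isClosed_reversibleSubmodule.completeSpace_coe
  inferInstance

theorem eigenspace_le_reversibleSubmodule {A : H →L[ℝ] H} (hA : IsCompactOperator A)
    (hcomm : ∀ g x, A (T g x) = T g (A x)) {μ : ℝ} (hμ : μ ≠ 0) :
    Module.End.eigenspace (A : Module.End ℝ H) μ ≤ reversibleSubmodule T := by
  refine le_reversibleSubmodule (A.finite_dimensional_eigenspace hA μ hμ) fun g x hx => ?_
  have hAx : A x = μ • x := Module.End.mem_eigenspace_iff.1 hx
  refine Module.End.mem_eigenspace_iff.2 ?_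
  change A (T g x) = μ • T g x
  rw [hcomm, hAx, map_smul]

theorem apply_eq_zero_of_mem_orthogonal_reversibleSubmodule {A : H →L[ℝ] H}
    (hA : IsCompactOperator A) (hsymm : A.IsSymmetric) (hcomm : ∀ g x, A (T g x) = T g (A x))
    {f : H} (hf : f ∈ (reversibleSubmodule T)ᗮ) : A f = 0 := by
  suffices A f ∈ (⨆ μ, Module.End.eigenspace (A : Module.End ℝ H) μ)ᗮ by
    rwa [A.orthogonalComplement_iSup_eigenspaces_eq_bot hA hsymm, Submodule.mem_bot] at this
  rw [← Submodule.iInf_orthogonal, Submodule.mem_iInf]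
  intro μ x hx
  have hAx : A x = μ • x := Module.End.mem_eigenspace_iff.1 hx
  have hinner : ⟪x, A f⟫ = μ * ⟪x, f⟫ := by
    rw [← real_inner_smul_left, ← hAx]
    exact (hsymm x f).symm
  rcases eq_or_ne μ 0 with rfl | hμ
  · rw [hinner, zero_mul]
  · rw [hinner, hf x (eigenspace_le_reversibleSubmodule hA hcomm hμ hx), mul_zero]

end Reversible

section GramOperator

open ContinuousLinearMap (adjoint)

variable {E F W : Type*} [NormedAddCommGroup E] [InnerProductSpace ℝ E] [CompleteSpace E]
  [NormedAddCommGroup F] [InnerProductSpace ℝ F] [CompleteSpace F]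
  [NormedAddCommGroup W] [InnerProductSpace ℝ W]

/-- The operator `∑ᵢ (C eᵢ)* (C eᵢ)` on `E`, where `e` is an orthonormal basis of `V`; the choice
of `e` is immaterial by `inner_gramOperator`. -/
noncomputable def gramOperator (C : W →L[ℝ] E →L[ℝ] F) (V : Submodule ℝ W)
    [FiniteDimensional ℝ V] : E →L[ℝ] E :=
  ∑ i, adjoint (C (stdOrthonormalBasis ℝ V i)) ∘L C (stdOrthonormalBasis ℝ V i)

variable {C : W →L[ℝ] E →L[ℝ] F} {V : Submodule ℝ W} [FiniteDimensional ℝ V]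

theorem inner_gramOperator {ι : Type*} [Fintype ι] (e : OrthonormalBasis ι ℝ V) (x y : E) :
    ⟪gramOperator C V x, y⟫ = ∑ i, ⟪C (e i) x, C (e i) y⟫ := by
  let β : V →ₗ[ℝ] V →ₗ[ℝ] ℝ :=
    (innerₗ F).compl₁₂ ((C.flip x : W →ₗ[ℝ] F) ∘ₗ V.subtype) ((C.flip y : W →ₗ[ℝ] F) ∘ₗ V.subtype)
  calc ⟪gramOperator C V x, y⟫
      = ∑ i, β (stdOrthonormalBasis ℝ V i) (stdOrthonormalBasis ℝ V i) := by
        simp [gramOperator, β, sum_inner, ContinuousLinearMap.adjoint_inner_left]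
    _ = ∑ i, β (e i) (e i) := sum_apply_orthonormalBasis_eq _ e β

theorem isPositive_gramOperator : (gramOperator C V).IsPositive :=
  ContinuousLinearMap.isPositive_sum _ fun _ _ =>
    ContinuousLinearMap.isPositive_adjoint_comp_self _

theorem isCompactOperator_gramOperator (hC : ∀ v ∈ V, IsCompactOperator (C v)) :
    IsCompactOperator (gramOperator C V) :=
  (compactOperator (RingHom.id ℝ) E E).sum_mem fun i _ =>
    (hC _ (stdOrthonormalBasis ℝ V i).2).clm_comp (adjoint (C (stdOrthonormalBasis ℝ V i)))

theorem gramOperator_map {t : E ≃ₗᵢ[ℝ] E} {s : F →ₗᵢ[ℝ] F} {u : W →ₗᵢ[ℝ] W}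
    (hC : ∀ v x, C (u v) (t x) = s (C v x)) (hV : ∀ v ∈ V, u v ∈ V) (x : E) :
    gramOperator C V (t x) = t (gramOperator C V x) := by
  let e := stdOrthonormalBasis ℝ V
  let uV : V →ₗᵢ[ℝ] V :=
    { toLinearMap := u.toLinearMap.restrict hV
      norm_map' := fun v => u.norm_map v }
  let ue := e.map (uV.toLinearIsometryEquiv rfl)
  have hue (i) : (ue i : W) = u (e i) := by
    rw [OrthonormalBasis.map_apply]
    rfl
  refine ext_inner_right ℝ fun y => ?_
  obtain ⟨y, rfl⟩ := t.surjective y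
  calc ⟪gramOperator C V (t x), t y⟫
      = ∑ i, ⟪C (ue i) (t x), C (ue i) (t y)⟫ := inner_gramOperator ue _ _
    _ = ∑ i, ⟪C (e i) x, C (e i) y⟫ := by simp only [hue, hC, s.inner_map_map]
    _ = ⟪t (gramOperator C V x), t y⟫ := by rw [t.inner_map_map, inner_gramOperator e]

theorem apply_eq_zero_of_gramOperator_eq_zero {x : E} (hx : gramOperator C V x = 0) {v : W}
    (hv : v ∈ V) : C v x = 0 := by
  let e := stdOrthonormalBasis ℝ V
  have hsum : ∑ i, ⟪C (e i) x, C (e i) x⟫ = 0 := by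
    rw [← inner_gramOperator e, hx, inner_zero_left]
  have hbasis (i) : C (e i) x = 0 :=
    inner_self_eq_zero.1 ((Finset.sum_eq_zero_iff_of_nonneg fun _ _ => real_inner_self_nonneg).1
      hsum i (Finset.mem_univ i))
  have hzero : (C.flip x : W →ₗ[ℝ] F) ∘ₗ V.subtype = 0 :=
    e.toBasis.ext fun i => by simpa using hbasis i
  exact LinearMap.congr_fun hzero ⟨v, hv⟩

end GramOperator

section Contraction

variable {E F W : Type*} [NormedAddCommGroup E] [NormedSpace ℝ E]
  [NormedAddCommGroup F] [InnerProductSpace ℝ F] [CompleteSpace F]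
  [NormedAddCommGroup W] [InnerProductSpace ℝ W]

/-- The operator `contraction B v : E → F` obtained by pairing `v` with the values of a bilinear map
`B`; it is determined by `⟪contraction B v a, b⟫ = ⟪v, B a b⟫`. -/
noncomputable def contraction (B : E →L[ℝ] F →L[ℝ] W) : W →L[ℝ] E →L[ℝ] F :=
  let riesz : StrongDual ℝ F →L[ℝ] F :=
    (toDual ℝ F).symm.toContinuousLinearEquiv.toContinuousLinearMap
  ContinuousLinearMap.compL ℝ E (StrongDual ℝ F) F riesz ∘L
    (ContinuousLinearMap.compL ℝ E (F →L[ℝ] W) (StrongDual ℝ F)).flip B ∘L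
    ContinuousLinearMap.compL ℝ F W ℝ ∘L innerSL ℝ

variable {B : E →L[ℝ] F →L[ℝ] W}

theorem inner_contraction (v : W) (a : E) (b : F) :
    ⟪contraction B v a, b⟫ = ⟪v, B a b⟫ :=
  toDual_symm_apply (𝕜 := ℝ) (E := F)

theorem contraction_map {t : E → E} {s : F ≃ₗᵢ[ℝ] F} {u : W →ₗᵢ[ℝ] W}
    (hB : ∀ a b, u (B a b) = B (t a) (s b)) (v : W) (a : E) :
    contraction B (u v) (t a) = s (contraction B v a) := by
  refine ext_inner_right ℝ fun b => ?_
  obtain ⟨b, rfl⟩ := s.surjective b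
  rw [inner_contraction, ← hB, u.inner_map_map, s.inner_map_map, inner_contraction]

end Contraction

/-- The bilinear map `tmul` has the inner products of a Hilbert tensor product on elementary
tensors. -/
def MultipliesInner {E F W : Type*} [NormedAddCommGroup E] [InnerProductSpace ℝ E]
    [NormedAddCommGroup F] [InnerProductSpace ℝ F] [NormedAddCommGroup W] [InnerProductSpace ℝ W]
    (tmul : E →ₗ[ℝ] F →ₗ[ℝ] W) : Prop :=
  ∀ (a c : E) (b d : F), ⟪tmul a b, tmul c d⟫ = ⟪a, c⟫ * ⟪b, d⟫

namespace MultipliesInner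

variable {E F W : Type*} [NormedAddCommGroup E] [InnerProductSpace ℝ E]
  [NormedAddCommGroup F] [InnerProductSpace ℝ F] [NormedAddCommGroup W] [InnerProductSpace ℝ W]
  {tmul : E →ₗ[ℝ] F →ₗ[ℝ] W}

theorem flip (htmul : MultipliesInner tmul) : MultipliesInner tmul.flip := fun a c b d =>
  (htmul b d a c).trans (mul_comm _ _)

theorem norm_apply (htmul : MultipliesInner tmul) (a : E) (b : F) :
    ‖tmul a b‖ = ‖a‖ * ‖b‖ := by
  refine (sq_eq_sq₀ (norm_nonneg _) (by positivity)).1 ?_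
  rw [mul_pow, ← real_inner_self_eq_norm_sq, ← real_inner_self_eq_norm_sq,
    ← real_inner_self_eq_norm_sq, htmul]

/-- `tmul` as a continuous bilinear map. -/
noncomputable def toContinuousBilin (htmul : MultipliesInner tmul) : E →L[ℝ] F →L[ℝ] W :=
  tmul.mkContinuous₂ 1 fun a b => by rw [htmul.norm_apply, one_mul]

theorem contraction_tmul [CompleteSpace F] (htmul : MultipliesInner tmul) (c : E) (d : F) :
    contraction htmul.toContinuousBilin (tmul c d) =
      ContinuousLinearMap.toSpanSingleton ℝ d ∘L innerSL ℝ c := by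
  ext a
  refine ext_inner_right ℝ fun b => ?_
  calc ⟪contraction htmul.toContinuousBilin (tmul c d) a, b⟫
      = ⟪tmul c d, tmul a b⟫ := inner_contraction _ _ _
    _ = ⟪c, a⟫ * ⟪d, b⟫ := htmul c a d b
    _ = ⟪(ContinuousLinearMap.toSpanSingleton ℝ d ∘L innerSL ℝ c) a, b⟫ :=
      (real_inner_smul_left _ _ _).symm

-- Elementary tensors contract to operators of rank one, and compactness survives norm limits.
theorem isCompactOperator_contraction [CompleteSpace F] (htmul : MultipliesInner tmul)
    (hdense : Dense (Submodule.map₂ tmul ⊤ ⊤ : Set W)) (v : W) :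
    IsCompactOperator (contraction htmul.toContinuousBilin v) := by
  let C := contraction htmul.toContinuousBilin
  have hle : Submodule.map₂ tmul ⊤ ⊤ ≤
      (compactOperator (RingHom.id ℝ) E F).comap (C : W →ₗ[ℝ] E →L[ℝ] F) := by
    refine Submodule.map₂_le.2 fun c _ d _ => ?_
    change IsCompactOperator (C (tmul c d))
    rw [htmul.contraction_tmul]
    exact (isCompactOperator_of_locallyCompactSpace_dom (innerSL ℝ c)).clm_comp
      (ContinuousLinearMap.toSpanSingleton ℝ d)
  have hclosed : IsClosed {v | IsCompactOperator (C v)} :=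
    isClosed_setOfPred_isCompactOperator.preimage C.continuous
  exact hclosed.closure_subset_iff.2 hle (hdense v)

end MultipliesInner

section DiagonalAction

variable {G H H' W : Type*} [NormedAddCommGroup H] [InnerProductSpace ℝ H]
  [NormedAddCommGroup H'] [InnerProductSpace ℝ H'] [NormedAddCommGroup W] [InnerProductSpace ℝ W]
  {T : G → H ≃ₗᵢ[ℝ] H} {S : G → H' ≃ₗᵢ[ℝ] H'} {U : G → W ≃ₗᵢ[ℝ] W}
  {tmul : H →ₗ[ℝ] H' →ₗ[ℝ] W}

theorem isFlight_tmul_left (htmul : MultipliesInner tmul)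
    (hdense : Dense (Submodule.map₂ tmul ⊤ ⊤ : Set W))
    (hdiag : ∀ g a b, U g (tmul a b) = tmul (T g a) (S g b)) {f : H}
    (hf : IsFlight (fun g x => T g x) f) (h : H') : IsFlight (fun g x => U g x) (tmul f h) := by
  obtain ⟨l, hl, hlim⟩ := isFlight_iff_exists_filter.1 hf
  refine isFlight_iff_exists_filter.2 ⟨l, hl, ?_⟩
  rw [Submodule.map₂_eq_span_image2] at hdense
  refine tendsto_inner_zero_of_dense_span (fun g => ((U g).norm_map _).le) hdense ?_
  rintro _ ⟨c, -, d, -, rfl⟩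
  simp only [hdiag, htmul (T _ f)]
  have hbdd (g) : |⟪S g h, d⟫| ≤ ‖h‖ * ‖d‖ := by
    simpa only [LinearIsometryEquiv.norm_map] using abs_real_inner_le_norm (S g h) d
  simpa only [mul_comm] using bdd_le_mul_tendsto_zero' _ (Eventually.of_forall hbdd) (hlim c)

theorem map₂_le_reversibleSubmodule (hdiag : ∀ g a b, U g (tmul a b) = tmul (T g a) (S g b))
    {V : Submodule ℝ H} [FiniteDimensional ℝ V] (hV : ∀ g, ∀ v ∈ V, T g v ∈ V)
    {V' : Submodule ℝ H'} [FiniteDimensional ℝ V'] (hV' : ∀ g, ∀ v ∈ V', S g v ∈ V') :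
    Submodule.map₂ tmul V V' ≤ reversibleSubmodule U := by
  refine le_reversibleSubmodule ?_ fun g => ?_
  · exact Module.Finite.iff_fg.2
      (.map₂ _ (Module.Finite.iff_fg.1 ‹_›) (Module.Finite.iff_fg.1 ‹_›))
  · change Submodule.map₂ tmul V V' ≤
      (Submodule.map₂ tmul V V').comap ((U g).toLinearEquiv : W →ₗ[ℝ] W)
    refine Submodule.map₂_le.2 fun a ha b hb => ?_
    change U g (tmul a b) ∈ Submodule.map₂ tmul V V'
    rw [hdiag]
    exact Submodule.apply_mem_map₂ _ (hV g a ha) (hV' g b hb)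

theorem tmul_mem_reversibleSubmodule (htmul : MultipliesInner tmul)
    (hdiag : ∀ g a b, U g (tmul a b) = tmul (T g a) (S g b)) {f : H}
    (hf : f ∈ reversibleSubmodule T) {h : H'} (hh : h ∈ reversibleSubmodule S) :
    tmul f h ∈ reversibleSubmodule U := by
  let B := htmul.toContinuousBilin
  refine reversibleSubmodule_le (K := (reversibleSubmodule U).comap (tmul.flip h))
    (isClosed_reversibleSubmodule.preimage (B.flip h).continuous) (fun V _ hV a ha => ?_) hf
  refine reversibleSubmodule_le (K := (reversibleSubmodule U).comap (tmul a))
    (isClosed_reversibleSubmodule.preimage (B a).continuous) (fun V' _ hV' b hb => ?_) hh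
  exact map₂_le_reversibleSubmodule hdiag hV hV' (Submodule.apply_mem_map₂ _ ha hb)

variable [CompleteSpace H] [CompleteSpace H']

theorem tmul_mem_orthogonal_reversibleSubmodule (htmul : MultipliesInner tmul)
    (hdense : Dense (Submodule.map₂ tmul ⊤ ⊤ : Set W))
    (hdiag : ∀ g a b, U g (tmul a b) = tmul (T g a) (S g b)) {f : H}
    (hf : f ∈ (reversibleSubmodule T)ᗮ) (b : H') : tmul f b ∈ (reversibleSubmodule U)ᗮ := by
  let C := contraction htmul.toContinuousBilin
  have hle : reversibleSubmodule U ≤ (ℝ ∙ tmul f b)ᗮ := by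
    refine reversibleSubmodule_le (Submodule.isClosed_orthogonal _) fun V _ hV v hv => ?_
    have hequi (g) (v : W) (x : H) : C (U g v) (T g x) = S g (C v x) :=
      contraction_map (u := (U g).toLinearIsometry) (hdiag g) v x
    have hgram : gramOperator C V f = 0 :=
      apply_eq_zero_of_mem_orthogonal_reversibleSubmodule
        (isCompactOperator_gramOperator fun v _ => htmul.isCompactOperator_contraction hdense v)
        isPositive_gramOperator.isSymmetric
        (fun g => gramOperator_map (s := (S g).toLinearIsometry) (u := (U g).toLinearIsometry)
          (hequi g) (hV g)) hf
    have hCv : C v f = 0 := apply_eq_zero_of_gramOperator_eq_zero hgram hv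
    rw [Submodule.mem_orthogonal_singleton_iff_inner_left]
    exact (inner_contraction v f b).symm.trans (by rw [hCv, inner_zero_left])
  exact fun v hv => Submodule.mem_orthogonal_singleton_iff_inner_left.1 (hle hv)

theorem map₂_top_le_sup_orthogonal_reversibleSubmodule (htmul : MultipliesInner tmul)
    (hdense : Dense (Submodule.map₂ tmul ⊤ ⊤ : Set W))
    (hdiag : ∀ g a b, U g (tmul a b) = tmul (T g a) (S g b)) :
    Submodule.map₂ tmul ⊤ ⊤ ≤
      Submodule.map₂ tmul (reversibleSubmodule T) (reversibleSubmodule S) ⊔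
        (reversibleSubmodule U)ᗮ := by
  refine Submodule.map₂_le.2 fun a _ b _ => ?_
  obtain ⟨a₁, ha₁, a₂, ha₂, rfl⟩ := (reversibleSubmodule T).exists_add_mem_mem_orthogonal a
  obtain ⟨b₁, hb₁, b₂, hb₂, rfl⟩ := (reversibleSubmodule S).exists_add_mem_mem_orthogonal b
  have hleft : tmul a₂ (b₁ + b₂) ∈ (reversibleSubmodule U)ᗮ :=
    tmul_mem_orthogonal_reversibleSubmodule htmul hdense hdiag ha₂ _
  have hright : tmul a₁ b₂ ∈ (reversibleSubmodule U)ᗮ :=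
    tmul_mem_orthogonal_reversibleSubmodule htmul.flip
      (by rwa [Submodule.map₂_flip]) (fun g a b => hdiag g b a) hb₂ a₁
  refine Submodule.mem_sup.2 ⟨_, Submodule.apply_mem_map₂ tmul ha₁ hb₁, _,
    Submodule.add_mem _ hright hleft, ?_⟩
  rw [map_add tmul, LinearMap.add_apply, map_add (tmul a₁), add_assoc]

theorem reversibleSubmodule_eq_topologicalClosure_map₂ (htmul : MultipliesInner tmul)
    (hdense : Dense (Submodule.map₂ tmul ⊤ ⊤ : Set W))
    (hdiag : ∀ g a b, U g (tmul a b) = tmul (T g a) (S g b)) :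
    reversibleSubmodule U = (Submodule.map₂ tmul (reversibleSubmodule T)
      (reversibleSubmodule S)).topologicalClosure := by
  have hle : Submodule.map₂ tmul (reversibleSubmodule T) (reversibleSubmodule S) ≤
      reversibleSubmodule U :=
    Submodule.map₂_le.2 fun a ha b hb => tmul_mem_reversibleSubmodule htmul hdiag ha hb
  refine le_antisymm ?_ (Submodule.topologicalClosure_minimal _ hle isClosed_reversibleSubmodule)
  exact le_topologicalClosure_of_dense_sup_orthogonal hle
    (hdense.mono (map₂_top_le_sup_orthogonal_reversibleSubmodule htmul hdense hdiag))

end DiagonalAction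

theorem stmt_9_general {G H H' W : Type*}
    [NormedAddCommGroup H] [InnerProductSpace ℝ H] [CompleteSpace H]
    [NormedAddCommGroup H'] [InnerProductSpace ℝ H'] [CompleteSpace H']
    [NormedAddCommGroup W] [InnerProductSpace ℝ W]
    (T : G → H ≃ₗᵢ[ℝ] H) (S : G → H' ≃ₗᵢ[ℝ] H') (U : G → W ≃ₗᵢ[ℝ] W)
    (tmul : H →ₗ[ℝ] H' →ₗ[ℝ] W)
    (htmul_inner : ∀ a c : H, ∀ b d : H', ⟪tmul a b, tmul c d⟫ = ⟪a, c⟫ * ⟪b, d⟫)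
    (hdense : Dense (↑(Submodule.span ℝ {w : W | ∃ a b, tmul a b = w}) : Set W))
    (hdiag : ∀ g a b, U g (tmul a b) = tmul (T g a) (S g b)) :
    revSpace U
      = closure (↑(Submodule.span ℝ
          {w : W | ∃ a ∈ revSpace T, ∃ b ∈ revSpace S, tmul a b = w}) : Set W) ∧
    (∀ (f : H) (h : H'), IsFlight (fun g x => T g x) f →
      IsFlight (fun g x => U g x) (tmul f h)) ∧
    (∀ (f : H) (h : H'), IsFlight (fun g x => S g x) h →
      IsFlight (fun g x => U g x) (tmul f h)) ∧
    (∀ f ∈ revSpace T, ∀ h ∈ revSpace S, tmul f h ∈ revSpace U) := by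
  have htmul : MultipliesInner tmul := htmul_inner
  have hdense_map₂ : Dense (Submodule.map₂ tmul ⊤ ⊤ : Set W) := by
    simpa [Submodule.map₂_eq_span_image2, Set.image2] using hdense
  simp only [← coe_reversibleSubmodule]
  refine ⟨?_, fun f h hf => isFlight_tmul_left htmul hdense_map₂ hdiag hf h, fun f h hh => ?_,
    fun f hf h hh => tmul_mem_reversibleSubmodule htmul hdiag hf hh⟩
  · rw [reversibleSubmodule_eq_topologicalClosure_map₂ htmul hdense_map₂ hdiag,
      Submodule.topologicalClosure_coe, Submodule.map₂_eq_span_image2]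
    rfl
  · exact isFlight_tmul_left htmul.flip (by rwa [Submodule.map₂_flip])
      (fun g a b => hdiag g b a) hh f

/-- **Jacobs–de Leeuw–Glicksberg splitting of a tensor product.**  For unitary actions of
`G` on Hilbert spaces `H, H'` and the diagonal action on their Hilbert tensor product `W`
(modelled abstractly by a bilinear `tmul` with `⟪a⊗b, c⊗d⟫ = ⟪a,c⟫⟪b,d⟫` and dense span of
elementary tensors), the reversible part of `W` is the closed span of tensors of
reversibles: `(H ⊗ H')_r = H_r ⊗ H'_r`; equivalently, flight ⊗ anything and anything ⊗
flight are flight, while reversible ⊗ reversible is reversible. -/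
theorem stmt_9 {G H H' W : Type*} [Group G]
    [NormedAddCommGroup H] [InnerProductSpace ℝ H] [CompleteSpace H]
    [NormedAddCommGroup H'] [InnerProductSpace ℝ H'] [CompleteSpace H']
    [NormedAddCommGroup W] [InnerProductSpace ℝ W] [CompleteSpace W]
    (T : G → H ≃ₗᵢ[ℝ] H) (S : G → H' ≃ₗᵢ[ℝ] H') (U : G → W ≃ₗᵢ[ℝ] W)
    (hT : ∀ g₁ g₂ x, T (g₁ * g₂) x = T g₁ (T g₂ x))
    (hS : ∀ g₁ g₂ x, S (g₁ * g₂) x = S g₁ (S g₂ x))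
    (hU : ∀ g₁ g₂ x, U (g₁ * g₂) x = U g₁ (U g₂ x))
    (tmul : H →ₗ[ℝ] H' →ₗ[ℝ] W)
    (htmul_inner : ∀ a c : H, ∀ b d : H', ⟪tmul a b, tmul c d⟫ = ⟪a, c⟫ * ⟪b, d⟫)
    (hdense : Dense (↑(Submodule.span ℝ {w : W | ∃ a b, tmul a b = w}) : Set W))
    (hdiag : ∀ g a b, U g (tmul a b) = tmul (T g a) (S g b)) :
    revSpace U
      = closure (↑(Submodule.span ℝ
          {w : W | ∃ a ∈ revSpace T, ∃ b ∈ revSpace S, tmul a b = w}) : Set W) ∧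
    (∀ (f : H) (h : H'), IsFlight (fun g x => T g x) f →
      IsFlight (fun g x => U g x) (tmul f h)) ∧
    (∀ (f : H) (h : H'), IsFlight (fun g x => S g x) h →
      IsFlight (fun g x => U g x) (tmul f h)) ∧
    (∀ f ∈ revSpace T, ∀ h ∈ revSpace S, tmul f h ∈ revSpace U) :=
  stmt_9_general T S U tmul htmul_inner hdense hdiag
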